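/- arXiv:1111.6156 — 2 statements merged into one kernel-verified Lean document; each statement's English description precedes it below -/
import Mathlib

section
/- Let G be a monotone symmetric congestion game whose game form is subset-free and has no bad configuration (i.e., G is a tree representable congestion game). Then every pure Nash equilibrium of G is a greedy profile: NE(G) ⊆ Z(G). -/
/-!
The order is built from the back. The last player of a greedy order responds to all the others, so
for her the greedy condition is the equilibrium condition; it therefore suffices to find, in every
equilibrium, a player whose removal leaves an equilibrium among the remaining players
(`exists_erase`).

A player `i` of least utility has this property. Suppose `j ≠ i` contemplates moving to `t` after
`i` has left. If `t ∩ s i ⊆ s j`, then no resource of `t` outside `s j` is less congested, so the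
move was not profitable before and is not profitable now. Otherwise, `s i` and `t` share a resource
outside `s j`, and tree representability forces `t ∩ s j = s i ∩ s j`: both paths branch off `s j` at
the same node. The equilibrium condition of `i` then says that for `j` moving to `t` is no better
than moving to the vacated `s i`, and this last move changes the payoff of `j` by exactly the
old utility of `i` minus that of `j`, which is at most zero by the choice of `i`.
-/

open Finset

/-- Congestion of resource `r` under strategy profile `s` (players `ι`). -/
def cgCong {ρ ι : Type} [DecidableEq ρ] [Fintype ι] (s : ι → Finset ρ) (r : ρ) : ℕ :=
  (Finset.univ.filter (fun i => r ∈ s i)).card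

/-- Utility of player `i`: the sum of `P r (c(s)_r)` over the resources she uses. -/
def cgUtil {ρ ι : Type} [DecidableEq ρ] [Fintype ι] (P : ρ → ℕ → ℝ)
    (s : ι → Finset ρ) (i : ι) : ℝ :=
  ∑ r ∈ s i, P r (cgCong s r)

/-- A strategy profile: every player selects a strategy from the strategy set `SS`. -/
def IsProfile {ρ ι : Type} (SS : Finset (Finset ρ)) (s : ι → Finset ρ) : Prop :=
  ∀ i, s i ∈ SS

/-- Pure Nash equilibrium. -/
def IsNE {ρ ι : Type} [DecidableEq ρ] [DecidableEq ι] [Fintype ι]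
    (SS : Finset (Finset ρ)) (P : ρ → ℕ → ℝ) (s : ι → Finset ρ) : Prop :=
  IsProfile SS s ∧
    ∀ i : ι, ∀ t ∈ SS, cgUtil P s i ≥ cgUtil P (Function.update s i t) i

/-- The congestion seen by player `i` on resource `r` from players preceding her
in the order `π`. -/
def greedyCong {ρ ι : Type} [DecidableEq ρ] [Fintype ι] (s : ι → Finset ρ)
    (π : ι → ℕ) (i : ι) (r : ρ) : ℕ :=
  (Finset.univ.filter (fun j => r ∈ s j ∧ π j < π i)).card

/-- Greedy profile: for some linear order (injective ranking `π`) of the players,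
each player's strategy is a best response to the choices of her predecessors. -/
def IsGreedy {ρ ι : Type} [DecidableEq ρ] [Fintype ι]
    (SS : Finset (Finset ρ)) (P : ρ → ℕ → ℝ) (s : ι → Finset ρ) : Prop :=
  IsProfile SS s ∧
    ∃ π : ι → ℕ, Function.Injective π ∧ ∀ i : ι, ∀ t ∈ SS,
      (∑ r ∈ s i, P r (greedyCong s π i r + 1)) ≥
        ∑ r ∈ t, P r (greedyCong s π i r + 1)

/-- Monotone resource payoffs (for a game with `n` players):
`P_r(k) > P_r(l)` whenever `1 ≤ k < l ≤ n`. -/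
def MonotonePay {ρ : Type} (n : ℕ) (P : ρ → ℕ → ℝ) : Prop :=
  ∀ r : ρ, ∀ k l : ℕ, 1 ≤ k → k < l → l ≤ n → P r k > P r l

/-- A congestion game form: nonempty strategy set consisting of nonempty resource sets. -/
def ValidForm {ρ : Type} (SS : Finset (Finset ρ)) : Prop :=
  SS.Nonempty ∧ ∀ s ∈ SS, s.Nonempty

/-- Subset-free strategy set. -/
def SubsetFree {ρ : Type} (SS : Finset (Finset ρ)) : Prop :=
  ∀ s ∈ SS, ∀ t ∈ SS, s ≠ t → ¬ s ⊆ t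

/-- A bad configuration (Holzman–Law Yone): a form is tree representable iff
it has no bad configuration. -/
def BadConfig {ρ : Type} (SS : Finset (Finset ρ)) : Prop :=
  ∃ A B : ρ, ∃ s1 ∈ SS, ∃ s2 ∈ SS, ∃ s3 ∈ SS,
    A ∈ s1 ∧ B ∈ s1 ∧ A ∈ s2 ∧ A ∉ s3 ∧ B ∈ s3 ∧ B ∉ s2

/-- Congestion of `r` when only the players in `T` are present. -/
def congOn {ρ ι : Type} [DecidableEq ρ] (s : ι → Finset ρ) (T : Finset ι) (r : ρ) : ℕ :=
  (T.filter (fun i => r ∈ s i)).card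

/-- The restriction of `s` to the players in `T` is an equilibrium of the game played by `T`. The
payoff of `t` to `i ∈ T` is expressed through the congestion caused by the other players of `T`. -/
def IsNEOn {ρ ι : Type} [DecidableEq ρ] [DecidableEq ι]
    (SS : Finset (Finset ρ)) (P : ρ → ℕ → ℝ) (s : ι → Finset ρ) (T : Finset ι) : Prop :=
  ∀ i ∈ T, ∀ t ∈ SS,
    ∑ r ∈ t, P r (congOn s (T.erase i) r + 1) ≤ ∑ r ∈ s i, P r (congOn s (T.erase i) r + 1)

theorem congOn_mono {ρ ι : Type} [DecidableEq ρ] {s : ι → Finset ρ} {T T' : Finset ι}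
    (h : T ⊆ T') (r : ρ) :
    congOn s T r ≤ congOn s T' r :=
  Finset.card_le_card (Finset.filter_subset_filter _ h)

section

variable {ρ ι : Type} [DecidableEq ρ] [DecidableEq ι]

theorem congOn_erase_of_mem {s : ι → Finset ρ} {T : Finset ι} {i : ι} {r : ρ}
    (hi : i ∈ T) (hr : r ∈ s i) : congOn s (T.erase i) r + 1 = congOn s T r := by
  unfold congOn
  rw [Finset.filter_erase, Finset.card_erase_add_one (by simp [hi, hr])]

theorem congOn_erase_of_notMem {s : ι → Finset ρ} {T : Finset ι} {i : ι} {r : ρ}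
    (hr : r ∉ s i) : congOn s (T.erase i) r = congOn s T r := by
  unfold congOn
  rw [Finset.filter_erase, Finset.erase_eq_of_notMem (by simp [hr])]

/-- A comparison of the sums over `t` and `u` depends only on the values off `t ∩ u`, and is
preserved when values decrease on `t \ u` and increase on `u \ t`. -/
theorem sum_le_sum_transfer {t u : Finset ρ} {f g : ρ → ℝ}
    (h : ∑ r ∈ t, f r ≤ ∑ r ∈ u, f r)
    (h1 : ∀ r ∈ t, r ∉ u → g r ≤ f r) (h2 : ∀ r ∈ u, r ∉ t → f r ≤ g r) :
    ∑ r ∈ t, g r ≤ ∑ r ∈ u, g r := by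
  have a1 : ∑ r ∈ t \ u, g r ≤ ∑ r ∈ t \ u, f r :=
    Finset.sum_le_sum fun r hr => h1 r (by simp_all) (by simp_all)
  have a2 : ∑ r ∈ u \ t, f r ≤ ∑ r ∈ u \ t, g r :=
    Finset.sum_le_sum fun r hr => h2 r (by simp_all) (by simp_all)
  have b1 := Finset.sum_sdiff_sub_sum_sdiff (s₁ := u) (s₂ := t) (f := f)
  have b2 := Finset.sum_sdiff_sub_sum_sdiff (s₁ := u) (s₂ := t) (f := g)
  linarith

/-- Two strategies that meet outside a third one branch off it at the same place. -/
theorem inter_subset_of_not_badConfig {SS : Finset (Finset ρ)} (htr : ¬ BadConfig SS)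
    {t u v : Finset ρ} (ht : t ∈ SS) (hu : u ∈ SS) (hv : v ∈ SS)
    {a : ρ} (hat : a ∈ t) (hau : a ∈ u) (hav : a ∉ v) {r : ρ} (hrt : r ∈ t) (hrv : r ∈ v) :
    r ∈ u := by
  by_contra hru
  exact htr ⟨a, r, t, ht, u, hu, v, hv, hat, hrt, hau, hav, hrv, hru⟩

/-- A player of least utility can be removed from an equilibrium. -/
theorem exists_erase [Fintype ι] {SS : Finset (Finset ρ)} {P : ρ → ℕ → ℝ}
    (htr : ¬ BadConfig SS) (hmono : MonotonePay (Fintype.card ι) P)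
    {s : ι → Finset ρ} (hs : IsProfile SS s) {T : Finset ι} (hT : T.Nonempty)
    (hne : IsNEOn SS P s T) : ∃ i ∈ T, IsNEOn SS P s (T.erase i) := by
  obtain ⟨i, hi, hmin⟩ := T.exists_min_image (fun j => ∑ r ∈ s j, P r (congOn s T r)) hT
  refine ⟨i, hi, fun j hj t ht => ?_⟩
  have hjT : j ∈ T := Finset.mem_of_mem_erase hj
  have hij : i ∈ T.erase j := Finset.mem_erase.2 ⟨(Finset.ne_of_mem_erase hj).symm, hi⟩
  have hcomm : (T.erase i).erase j = (T.erase j).erase i := Finset.erase_right_comm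
  by_cases hcase : ∃ a ∈ t, a ∈ s i ∧ a ∉ s j
  · obtain ⟨a, hat, hai, haj⟩ := hcase
    have to_i : ∑ r ∈ t, P r (congOn s ((T.erase i).erase j) r + 1) ≤
        ∑ r ∈ s i, P r (congOn s ((T.erase i).erase j) r + 1) := by
      refine sum_le_sum_transfer (hne i hi t ht) (fun r hr hr' => ?_) (fun r hr hr' => ?_)
      · have : r ∉ s j := fun h =>
          hr' (inter_subset_of_not_badConfig htr ht (hs i) (hs j) hat hai haj hr h)
        rw [congOn_erase_of_notMem this]
      · have : r ∉ s j := fun h =>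
          hr' (inter_subset_of_not_badConfig htr (hs i) ht (hs j) hai hat haj hr h)
        rw [congOn_erase_of_notMem this]
    refine to_i.trans (sum_le_sum_transfer (hmin j hjT) (fun r hr hr' => ?_) (fun r hr hr' => ?_))
    · rw [congOn_erase_of_notMem hr', congOn_erase_of_mem hi hr]
    · rw [congOn_erase_of_mem hj hr, congOn_erase_of_notMem hr']
  · push Not at hcase
    rw [hcomm]
    refine sum_le_sum_transfer (hne j hjT t ht) (fun r hr hr' => ?_) (fun r hr hr' => ?_)
    · rw [congOn_erase_of_notMem fun h => hr' (hcase r hr h)]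
    · have hle : congOn s ((T.erase j).erase i) r ≤ congOn s (T.erase j) r :=
        congOn_mono (Finset.erase_subset _ _) r
      have hcard : congOn s (T.erase j) r + 1 ≤ Fintype.card ι := by
        rw [congOn_erase_of_mem hjT hr]
        exact Finset.card_le_univ _
      rcases hle.eq_or_lt with h | h
      · rw [h]
      · exact (hmono r _ _ (by omega) (by omega) hcard).le

/-- Every equilibrium among the players of `T` admits a greedy order of `T`, here a ranking by
`0, …, |T| - 1`. -/
theorem exists_greedy_order [Fintype ι] {SS : Finset (Finset ρ)} {P : ρ → ℕ → ℝ}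
    (htr : ¬ BadConfig SS) (hmono : MonotonePay (Fintype.card ι) P)
    {s : ι → Finset ρ} (hs : IsProfile SS s) (n : ℕ) :
    ∀ T : Finset ι, T.card = n → IsNEOn SS P s T →
      ∃ π : ι → ℕ, Set.InjOn π T ∧ (∀ i ∈ T, π i < n) ∧ ∀ i ∈ T, ∀ t ∈ SS,
        ∑ r ∈ t, P r (congOn s (T.filter (fun j => π j < π i)) r + 1) ≤
          ∑ r ∈ s i, P r (congOn s (T.filter (fun j => π j < π i)) r + 1) := by
  induction n with
  | zero =>
    intro T hT _
    obtain rfl := Finset.card_eq_zero.1 hT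
    exact ⟨fun _ => 0, by simp, by simp, by simp⟩
  | succ n ih =>
    intro T hT hne
    obtain ⟨i, hi, hne'⟩ := exists_erase htr hmono hs (Finset.card_pos.1 (by omega)) hne
    obtain ⟨π, hinj, hlt, hgr⟩ := ih (T.erase i) (by rw [Finset.card_erase_of_mem hi]; omega) hne'
    have hval : ∀ j ∈ T, j ≠ i → π j < n := fun j hj hji =>
      hlt j (Finset.mem_erase.2 ⟨hji, hj⟩)
    refine ⟨Function.update π i n, ?_, ?_, ?_⟩
    · intro a ha b hb hab
      have ha' : a ∈ T := ha
      have hb' : b ∈ T := hb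
      by_cases hai : a = i <;> by_cases hbi : b = i
      · rw [hai, hbi]
      · have := hval b hb' hbi
        simp [hai, hbi] at hab
        omega
      · have := hval a ha' hai
        simp [hai, hbi] at hab
        omega
      · simp only [Function.update_of_ne hai, Function.update_of_ne hbi] at hab
        exact hinj (by simp [hai, ha']) (by simp [hbi, hb']) hab
    · intro j hj
      by_cases hji : j = i
      · simp [hji]
      · have := hval j hj hji
        rw [Function.update_of_ne hji]
        omega
    · intro j hj t ht
      by_cases hji : j = i
      · subst hji
        have : T.filter (fun k => Function.update π j n k < Function.update π j n j) =
            T.erase j := by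
          ext k
          by_cases hk : k = j
          · simp [hk]
          · simpa [hk] using fun h => hval k h hk
        rw [this]
        exact hne j hj t ht
      · have : T.filter (fun k => Function.update π i n k < Function.update π i n j) =
            (T.erase i).filter (fun k => π k < π j) := by
          ext k
          by_cases hk : k = i
          · simpa [hk, hji] using fun _ => (hval j hj hji).le
          · simp [hk, hji]
        rw [this]
        exact hgr j (Finset.mem_erase.2 ⟨hji, hj⟩) t ht

theorem cgUtil_update [Fintype ι] (P : ρ → ℕ → ℝ) (s : ι → Finset ρ) (i : ι) (t : Finset ρ) :
    cgUtil P (Function.update s i t) i = ∑ r ∈ t, P r (congOn s (univ.erase i) r + 1) := by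
  unfold cgUtil
  rw [Function.update_self]
  refine Finset.sum_congr rfl fun r hr => ?_
  have h : congOn (Function.update s i t) (univ.erase i) r = congOn s (univ.erase i) r := by
    unfold congOn
    congr 1
    refine Finset.filter_congr fun j hj => ?_
    rw [Function.update_of_ne (Finset.ne_of_mem_erase hj)]
  rw [← h, congOn_erase_of_mem (Finset.mem_univ i) (by simpa using hr)]
  rfl

end

/-- In a monotone symmetric congestion game whose subset-free game form has no
bad configuration, every pure Nash equilibrium is a greedy profile. -/
theorem NE_subset_greedy {ρ ι : Type} [DecidableEq ρ] [Fintype ρ]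
    [DecidableEq ι] [Fintype ι] [Nonempty ι]
    (SS : Finset (Finset ρ)) (P : ρ → ℕ → ℝ)
    (hform : ValidForm SS) (hsf : SubsetFree SS) (htr : ¬ BadConfig SS)
    (hmono : MonotonePay (Fintype.card ι) P)
    (s : ι → Finset ρ) (hne : IsNE SS P s) :
    IsGreedy SS P s := by
  obtain ⟨hs, hbr⟩ := hne
  have hne' : IsNEOn SS P s univ := by
    intro i _ t ht
    have h := hbr i t ht
    nth_rewrite 1 [← Function.update_eq_self i s] at h
    rwa [cgUtil_update, cgUtil_update] at h
  obtain ⟨π, hinj, -, hgr⟩ := exists_greedy_order htr hmono hs _ univ rfl hne'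
  have hcong : ∀ i r, greedyCong s π i r = congOn s (univ.filter (fun j => π j < π i)) r := by
    intro i r
    unfold greedyCong congOn
    rw [Finset.filter_filter]
    congr 1
    exact Finset.filter_congr fun j _ => and_comm
  refine ⟨hs, π, fun a b h => hinj (by simp) (by simp) h, fun i t ht => ?_⟩
  simp only [hcong]
  exact hgr i (Finset.mem_univ i) t ht
end

section
/- Every symmetric congestion game admits Rosenthal's exact potential: define Φ(s) = Σ_{r ∈ R} Σ_{k=1}^{c(s)_r} P_r(k) for every strategy profile s. Then for every profile s, every player i, and every strategy t ∈ Σ, U^i(t, s^{-i}) − U^i(s) = Φ(t, s^{-i}) − Φ(s). Consequently, every strictly improving path (a sequence of profiles in which at each step a single player changes strategy and strictly increases her own utility) is finite. -/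
/-!
Fix a player `i`, and let `d r` be the number of *other* players using the resource `r`. If `i`
uses `r`, then the congestion of `r` is `d r + 1`, so the last term of the inner sum of the
potential is exactly what `i` receives from `r`; otherwise the congestion is `d r`. Hence the
potential is the utility of `i` plus `∑ r, ∑ k ∈ Icc 1 (d r), P r k`, which does not depend on the
strategy of `i` (`rosenthalPotential_eq`). Two profiles that differ only at `i` therefore have the
same difference in utility as in potential (`util_sub_eq_potential_sub`).

The potential strictly increases along improving steps, so an infinite improving path would be an
injective sequence of profiles, which is impossible as there are only finitely many of them.
-/

open Finset

/-- Rosenthal's potential: `Φ(s) = Σ_{r ∈ R} Σ_{k=1}^{c(s)_r} P_r(k)`. -/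
def rosenthalPotential {ρ ι : Type} [DecidableEq ρ] [Fintype ρ] [Fintype ι]
    (P : ρ → ℕ → ℝ) (s : ι → Finset ρ) : ℝ :=
  ∑ r : ρ, ∑ k ∈ Finset.Icc 1 (cgCong s r), P r k

/-- A strictly improving step: a single player changes strategy and strictly
increases her own utility. -/
def ImpStep {ρ ι : Type} [DecidableEq ρ] [Fintype ι]
    (SS : Finset (Finset ρ)) (P : ρ → ℕ → ℝ) (s s' : ι → Finset ρ) : Prop :=
  ∃ i : ι, s' i ∈ SS ∧ s' i ≠ s i ∧ (∀ j : ι, j ≠ i → s' j = s j) ∧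
    cgUtil P s' i > cgUtil P s i

/-- The number of players other than `i` that use the resource `r`. -/
def othersCong {ρ ι : Type} [DecidableEq ρ] [DecidableEq ι] [Fintype ι]
    (s : ι → Finset ρ) (i : ι) (r : ρ) : ℕ :=
  ((Finset.univ.erase i).filter (fun j => r ∈ s j)).card

lemma cgCong_eq {ρ ι : Type} [DecidableEq ρ] [DecidableEq ι] [Fintype ι]
    (s : ι → Finset ρ) (i : ι) (r : ρ) :
    cgCong s r = othersCong s i r + if r ∈ s i then 1 else 0 := by
  unfold cgCong othersCong
  rw [Finset.card_filter, Finset.card_filter, Finset.sum_erase_add _ _ (Finset.mem_univ i)]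

lemma rosenthalPotential_eq {ρ ι : Type} [DecidableEq ρ] [Fintype ρ] [DecidableEq ι] [Fintype ι]
    (P : ρ → ℕ → ℝ) (s : ι → Finset ρ) (i : ι) :
    rosenthalPotential P s =
      cgUtil P s i + ∑ r : ρ, ∑ k ∈ Finset.Icc 1 (othersCong s i r), P r k := by
  have hU : cgUtil P s i = ∑ r : ρ, if r ∈ s i then P r (cgCong s r) else 0 := by
    simp [cgUtil]
  rw [hU, rosenthalPotential, ← Finset.sum_add_distrib]
  refine Finset.sum_congr rfl fun r _ => ?_
  rw [cgCong_eq s i r]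
  split_ifs
  · rw [Finset.sum_Icc_succ_top (by omega), add_comm]
  · simp

lemma util_sub_eq_potential_sub {ρ ι : Type} [DecidableEq ρ] [Fintype ρ] [DecidableEq ι]
    [Fintype ι] (P : ρ → ℕ → ℝ) {s s' : ι → Finset ρ} {i : ι} (h : ∀ j, j ≠ i → s' j = s j) :
    cgUtil P s' i - cgUtil P s i = rosenthalPotential P s' - rosenthalPotential P s := by
  have hd : ∀ r, othersCong s' i r = othersCong s i r := fun r => by
    unfold othersCong
    congr 1
    refine Finset.filter_congr fun j hj => ?_
    rw [h j (Finset.ne_of_mem_erase hj)]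
  rw [rosenthalPotential_eq P s' i, rosenthalPotential_eq P s i]
  simp only [hd]
  ring

/-- Rosenthal's potential is an exact potential: a unilateral deviation changes
the deviator's utility by exactly the change in the potential. Consequently,
every strictly improving path is finite. -/
theorem rosenthal_exact_potential {ρ ι : Type} [DecidableEq ρ] [Fintype ρ]
    [DecidableEq ι] [Fintype ι] [Nonempty ι]
    (SS : Finset (Finset ρ)) (hform : ValidForm SS) (P : ρ → ℕ → ℝ) :
    (∀ s : ι → Finset ρ, IsProfile SS s → ∀ i : ι, ∀ t ∈ SS,
      cgUtil P (Function.update s i t) i - cgUtil P s i =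
        rosenthalPotential P (Function.update s i t) - rosenthalPotential P s) ∧
    ¬ ∃ seq : ℕ → ι → Finset ρ, IsProfile SS (seq 0) ∧
        ∀ k : ℕ, ImpStep SS P (seq k) (seq (k + 1)) := by
  refine ⟨fun s _ i t _ =>
    util_sub_eq_potential_sub P fun j hj => Function.update_of_ne hj t s, ?_⟩
  rintro ⟨seq, -, hstep⟩
  have hmono : StrictMono fun k => rosenthalPotential P (seq k) := by
    refine strictMono_nat_of_lt_succ fun k => ?_
    obtain ⟨i, -, -, hj, hgt⟩ := hstep k
    have := util_sub_eq_potential_sub P hj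
    linarith
  have hinj : Function.Injective seq := fun a b hab =>
    hmono.injective (congrArg (rosenthalPotential P) hab)
  exact not_injective_infinite_finite seq hinj
end
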